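/- Under the symbolwise construction (Context B), for all n ≥ 1: P_n^X ≤ 2^{−n(ℓ − γ_n)} and P_n^Y ≤ 2^{−n(ℓ − γ_n)}; consequently liminf_{n→∞} min{ −(1/n) log₂ P_n^X , −(1/n) log₂ P_n^Y } ≥ ℓ. -/

import Mathlib

open Finset Filter Real
open scoped BigOperators

noncomputable section

/-- `p` is a probability mass function on a finite type. -/
def IsPMF {α : Type*} [Fintype α] (p : α → ℝ) : Prop :=
  (∀ a, 0 ≤ p a) ∧ ∑ a, p a = 1

open scoped Classical in
/-- The distribution (pushforward pmf) of a random variable `X`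
defined on a finite sample space carrying the pmf `p`. -/
def distOf {Ω α : Type*} [Fintype Ω] (p : Ω → ℝ) (X : Ω → α) (x : α) : ℝ :=
  ∑ ω ∈ Finset.univ.filter fun ω => X ω = x, p ω

/-- Base-2 Shannon entropy of a pmf on a finite type
(the convention `0 · log₂ 0 = 0` holds since `Real.logb 2 0 = 0`). -/
def ent {α : Type*} [Fintype α] (q : α → ℝ) : ℝ :=
  -∑ x, q x * Real.logb 2 (q x)

/-- Base-2 entropy `H(X)` of a random variable `X` under pmf `p`. -/
def entRV {Ω α : Type*} [Fintype Ω] [Fintype α] (p : Ω → ℝ) (X : Ω → α) : ℝ :=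
  ent (distOf p X)

/-- Base-2 conditional entropy `H(X|Y) = H(X,Y) − H(Y)`. -/
def condEnt {Ω α β : Type*} [Fintype Ω] [Fintype α] [Fintype β]
    (p : Ω → ℝ) (X : Ω → α) (Y : Ω → β) : ℝ :=
  entRV p (fun ω => (X ω, Y ω)) - entRV p Y

/-- Base-2 mutual information `I(X;Y) = H(X) + H(Y) − H(X,Y)`. -/
def MI {Ω α β : Type*} [Fintype Ω] [Fintype α] [Fintype β]
    (p : Ω → ℝ) (X : Ω → α) (Y : Ω → β) : ℝ :=
  entRV p X + entRV p Y - entRV p (fun ω => (X ω, Y ω))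

/-- `X` and `Y` are independent random variables under the pmf `p`. -/
def IndepRV {Ω α β : Type*} [Fintype Ω] (p : Ω → ℝ) (X : Ω → α) (Y : Ω → β) : Prop :=
  ∀ a b, distOf p (fun ω => (X ω, Y ω)) (a, b) = distOf p X a * distOf p Y b

variable {𝒮 𝒳 𝒴 : Type}

/-- Single-letter sample-space pmf on `𝒮 × 𝒰`: the secret `S ~ PS` and an
independent uniform random number `U` on `𝒰`. -/
def p1 (PS : 𝒮 → ℝ) (𝒰 : Type) [Fintype 𝒰] : 𝒮 × 𝒰 → ℝ :=
  fun su => PS su.1 / (Fintype.card 𝒰 : ℝ)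

/-- The i.i.d. `n`-fold sample-space pmf on `Fin n → 𝒮 × 𝒰`. -/
def pn (PS : 𝒮 → ℝ) (𝒰 : Type) [Fintype 𝒰] (n : ℕ) :
    (Fin n → 𝒮 × 𝒰) → ℝ :=
  fun ω => ∏ i, p1 PS 𝒰 (ω i)

/-- The secret word `Sⁿ` as a random variable. -/
def SnB (𝒰 : Type) (n : ℕ) : (Fin n → 𝒮 × 𝒰) → (Fin n → 𝒮) :=
  fun ω i => (ω i).1

/-- The first share `Xⁿ` produced by the symbolwise encoder `φₙ*`. -/
def XnB (f : 𝒮 × 𝒰 → 𝒳 × 𝒴) (n : ℕ) : (Fin n → 𝒮 × 𝒰) → (Fin n → 𝒳) :=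
  fun ω i => (f (ω i)).1

/-- The second share `Yⁿ` produced by the symbolwise encoder `φₙ*`. -/
def YnB (f : 𝒮 × 𝒰 → 𝒳 × 𝒴) (n : ℕ) : (Fin n → 𝒮 × 𝒰) → (Fin n → 𝒴) :=
  fun ω i => (f (ω i)).2

open scoped Classical in
/-- The acceptance region `𝒜ₙ*`: pairs of positive probability whose
normalized information density exceeds `ℓ − γₙ`. -/
def AccB [Fintype 𝒮] [Fintype 𝒳] [Fintype 𝒴]
    (PS : 𝒮 → ℝ) (𝒰 : Type) [Fintype 𝒰] (f : 𝒮 × 𝒰 → 𝒳 × 𝒴)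
    (ℓ : ℝ) (γ : ℕ → ℝ) (n : ℕ) : Finset ((Fin n → 𝒳) × (Fin n → 𝒴)) :=
  Finset.univ.filter fun xy =>
    0 < distOf (pn PS 𝒰 n) (XnB f n) xy.1 * distOf (pn PS 𝒰 n) (YnB f n) xy.2 ∧
    ℓ - γ n < Real.logb 2
        (distOf (pn PS 𝒰 n) (fun ω => (XnB f n ω, YnB f n ω)) xy /
          (distOf (pn PS 𝒰 n) (XnB f n) xy.1 *
            distOf (pn PS 𝒰 n) (YnB f n) xy.2)) / (n : ℝ)

open scoped Classical in
/-- The symbolwise application `gₙ` of the single-letter decoder `g`. -/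
def gnB (g : 𝒳 × 𝒴 → Option 𝒮) (n : ℕ)
    (xy : (Fin n → 𝒳) × (Fin n → 𝒴)) : Option (Fin n → 𝒮) :=
  if h : ∀ i, (g (xy.1 i, xy.2 i)).isSome then
    some (fun i => (g (xy.1 i, xy.2 i)).get (h i))
  else none

open scoped Classical in
/-- The decoder `ψₙ*`: decode symbolwise inside `𝒜ₙ*`, declare `⊥` outside. -/
def psiB [Fintype 𝒮] [Fintype 𝒳] [Fintype 𝒴]
    (PS : 𝒮 → ℝ) (𝒰 : Type) [Fintype 𝒰] (f : 𝒮 × 𝒰 → 𝒳 × 𝒴)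
    (g : 𝒳 × 𝒴 → Option 𝒮) (ℓ : ℝ) (γ : ℕ → ℝ) (n : ℕ)
    (xy : (Fin n → 𝒳) × (Fin n → 𝒴)) : Option (Fin n → 𝒮) :=
  if xy ∈ AccB PS 𝒰 f ℓ γ n then gnB g n xy else none

open scoped Classical in
/-- The decoding error probability `Pₙᵉ = Pr{ψₙ*(φₙ*(Sⁿ,Uⁿ)) ≠ Sⁿ}`. -/
def PeB [Fintype 𝒮] [Fintype 𝒳] [Fintype 𝒴]
    (PS : 𝒮 → ℝ) (𝒰 : Type) [Fintype 𝒰] (f : 𝒮 × 𝒰 → 𝒳 × 𝒴)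
    (g : 𝒳 × 𝒴 → Option 𝒮) (ℓ : ℝ) (γ : ℕ → ℝ) (n : ℕ) : ℝ :=
  ∑ ω ∈ Finset.univ.filter (fun ω : Fin n → 𝒮 × 𝒰 =>
      psiB PS 𝒰 f g ℓ γ n (XnB f n ω, YnB f n ω) ≠ some (SnB 𝒰 n ω)),
    pn PS 𝒰 n ω

/-- `Pₙˣ`: maximal success probability of impersonating participant 1. -/
def PimpXB [Fintype 𝒮] [Fintype 𝒳] [Fintype 𝒴]
    (PS : 𝒮 → ℝ) (𝒰 : Type) [Fintype 𝒰] (f : 𝒮 × 𝒰 → 𝒳 × 𝒴)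
    (ℓ : ℝ) (γ : ℕ → ℝ) (n : ℕ) : ℝ :=
  ⨆ Q : {Q : (Fin n → 𝒳) → ℝ // IsPMF Q},
    ∑ xy ∈ AccB PS 𝒰 f ℓ γ n, Q.1 xy.1 * distOf (pn PS 𝒰 n) (YnB f n) xy.2

/-- `Pₙʸ`: maximal success probability of impersonating participant 2. -/
def PimpYB [Fintype 𝒮] [Fintype 𝒳] [Fintype 𝒴]
    (PS : 𝒮 → ℝ) (𝒰 : Type) [Fintype 𝒰] (f : 𝒮 × 𝒰 → 𝒳 × 𝒴)
    (ℓ : ℝ) (γ : ℕ → ℝ) (n : ℕ) : ℝ :=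
  ⨆ Q : {Q : (Fin n → 𝒴) → ℝ // IsPMF Q},
    ∑ xy ∈ AccB PS 𝒰 f ℓ γ n, distOf (pn PS 𝒰 n) (XnB f n) xy.1 * Q.1 xy.2

open scoped Classical in
theorem aux_boundX {α β : Type*} [Fintype α] [Fintype β] (A : Finset (α × β))
    (J : α × β → ℝ) (PX : α → ℝ) (PY : β → ℝ) (t : ℝ) (ht : 0 < t)
    (hJ : ∀ xy, 0 ≤ J xy) (hPX : ∀ x, 0 ≤ PX x) (hm : ∀ x, ∑ y, J (x, y) ≤ PX x)
    (hA : ∀ xy ∈ A, 0 < PX xy.1 * PY xy.2 ∧ t * (PX xy.1 * PY xy.2) ≤ J xy)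
    (Q : α → ℝ) (hQ : IsPMF Q) :
    ∑ xy ∈ A, Q xy.1 * PY xy.2 ≤ t⁻¹ := by
  have h1 : ∀ xy ∈ A, Q xy.1 * PY xy.2 ≤ t⁻¹ * (Q xy.1 * (J xy / PX xy.1)) := by
    intro xy hxy
    obtain ⟨h0, h1⟩ := hA xy hxy
    have hx : 0 < PX xy.1 := lt_of_le_of_ne (hPX _) (by
      intro h; rw [← h] at h0; simp at h0)
    have : PY xy.2 ≤ t⁻¹ * (J xy / PX xy.1) := by
      rw [inv_mul_eq_div, le_div_iff₀ ht, le_div_iff₀ hx]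
      linarith
    calc Q xy.1 * PY xy.2 ≤ Q xy.1 * (t⁻¹ * (J xy / PX xy.1)) :=
          mul_le_mul_of_nonneg_left this (hQ.1 _)
      _ = _ := by ring
  calc ∑ xy ∈ A, Q xy.1 * PY xy.2 ≤ ∑ xy ∈ A, t⁻¹ * (Q xy.1 * (J xy / PX xy.1)) :=
        Finset.sum_le_sum h1
    _ ≤ ∑ xy, t⁻¹ * (Q xy.1 * (J xy / PX xy.1)) := by
        apply Finset.sum_le_univ_sum_of_nonneg
        intro xy
        have := hJ xy; have := hPX xy.1; have := hQ.1 xy.1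
        positivity
    _ = t⁻¹ * ∑ x, Q x * ((∑ y, J (x, y)) / PX x) := by
        rw [← Finset.mul_sum, Fintype.sum_prod_type]
        simp only [Finset.mul_sum, Finset.sum_div]
    _ ≤ t⁻¹ * ∑ x, Q x * 1 := by
        gcongr with x
        · exact hQ.1 x
        · exact div_le_one_of_le₀ (hm x) (hPX x)
    _ = t⁻¹ := by simp [hQ.2]

theorem aux_boundY {α β : Type*} [Fintype α] [Fintype β] (A : Finset (α × β))
    (J : α × β → ℝ) (PX : α → ℝ) (PY : β → ℝ) (t : ℝ) (ht : 0 < t)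
    (hJ : ∀ xy, 0 ≤ J xy) (hPY : ∀ x, 0 ≤ PY x) (hm : ∀ y, ∑ x, J (x, y) ≤ PY y)
    (hA : ∀ xy ∈ A, 0 < PX xy.1 * PY xy.2 ∧ t * (PX xy.1 * PY xy.2) ≤ J xy)
    (Q : β → ℝ) (hQ : IsPMF Q) :
    ∑ xy ∈ A, PX xy.1 * Q xy.2 ≤ t⁻¹ := by
  have := aux_boundX (A.map (Equiv.prodComm α β).toEmbedding) (fun yx => J yx.swap) PY PX t ht
    (fun _ => hJ _) hPY hm (by
      intro xy h
      have := hA xy.swap (by simpa [Finset.mem_map_equiv] using h)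
      simpa [mul_comm] using this) Q hQ
  simpa [Finset.sum_map, mul_comm] using this

theorem distOf_nonneg {Ω α : Type*} [Fintype Ω] (p : Ω → ℝ) (hp : ∀ ω, 0 ≤ p ω) (X : Ω → α)
    (x : α) : 0 ≤ distOf p X x := Finset.sum_nonneg fun _ _ => hp _

theorem le_distOf {Ω α : Type*} [Fintype Ω] (p : Ω → ℝ) (hp : ∀ ω, 0 ≤ p ω) (X : Ω → α)
    (w : Ω) : p w ≤ distOf p X (X w) := by
  unfold distOf
  exact Finset.single_le_sum (f := p) (fun i _ => hp i) (by simp)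

theorem distOf_sum_mul {Ω α : Type*} [Fintype Ω] [Fintype α] (p : Ω → ℝ) (X : Ω → α)
    (g : α → ℝ) : ∑ x, distOf p X x * g x = ∑ ω, p ω * g (X ω) := by
  classical
  unfold distOf
  simp only [Finset.sum_mul, Finset.sum_filter]
  rw [Finset.sum_comm]
  refine Finset.sum_congr rfl fun w _ => ?_
  simp

theorem distOf_sum {Ω α : Type*} [Fintype Ω] [Fintype α] (p : Ω → ℝ) (X : Ω → α) :
    ∑ x, distOf p X x = ∑ ω, p ω := by
  simpa using distOf_sum_mul p X (fun _ => 1)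

theorem distOf_margX {Ω α β : Type*} [Fintype Ω] [Fintype β] (p : Ω → ℝ)
    (X : Ω → α) (Y : Ω → β) (x : α) :
    ∑ y, distOf p (fun ω => (X ω, Y ω)) (x, y) = distOf p X x := by
  classical
  unfold distOf
  simp only [Finset.sum_filter, Prod.mk.injEq]
  rw [Finset.sum_comm]
  refine Finset.sum_congr rfl fun w _ => ?_
  by_cases h : X w = x <;> simp [h]

theorem distOf_margY {Ω α β : Type*} [Fintype Ω] [Fintype α] (p : Ω → ℝ)
    (X : Ω → α) (Y : Ω → β) (y : β) :
    ∑ x, distOf p (fun ω => (X ω, Y ω)) (x, y) = distOf p Y y := by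
  classical
  unfold distOf
  simp only [Finset.sum_filter, Prod.mk.injEq]
  rw [Finset.sum_comm]
  refine Finset.sum_congr rfl fun w _ => ?_
  by_cases h : Y w = y <;> simp [h]

theorem distOf_pow {Ω α γ : Type*} [Fintype Ω] (p : Ω → ℝ) (h : Ω → α) (a : α) (n : ℕ)
    (H : (Fin n → Ω) → γ) (c : γ) (hH : ∀ ω, H ω = c ↔ ∀ i, h (ω i) = a) :
    distOf (fun ω : Fin n → Ω => ∏ i, p (ω i)) H c = distOf p h a ^ n := by
  classical
  unfold distOf
  have := Finset.prod_univ_sum (fun _ : Fin n => Finset.univ.filter fun w => h w = a)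
    (fun _ w => p w)
  simp only [Finset.prod_const, Finset.card_univ, Fintype.card_fin] at this
  convert this.symm using 2
  · ext w; simp [hH, Fintype.mem_piFinset]

theorem entRV_eq {Ω α : Type*} [Fintype Ω] [Fintype α] (p : Ω → ℝ) (X : Ω → α) :
    entRV p X = - ∑ ω, p ω * Real.logb 2 (distOf p X (X ω)) := by
  unfold entRV ent
  rw [distOf_sum_mul p X (fun x => Real.logb 2 (distOf p X x))]

theorem exists_good {Ω α β : Type*} [Fintype Ω] [Fintype α] [Fintype β] (p : Ω → ℝ)
    (hp : IsPMF p) (X : Ω → α) (Y : Ω → β) :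
    ∃ w, 0 < p w ∧ MI p X Y ≤ Real.logb 2 (distOf p (fun ω => (X ω, Y ω)) (X w, Y w) /
      (distOf p X (X w) * distOf p Y (Y w))) := by
  by_contra! hc
  have hpos : ∃ w, 0 < p w := by
    by_contra! h
    have : ∑ w, p w ≤ 0 := Finset.sum_nonpos fun i _ => h i
    linarith [hp.2]
  set i : Ω → ℝ := fun w => Real.logb 2 (distOf p (fun ω => (X ω, Y ω)) (X w, Y w) /
      (distOf p X (X w) * distOf p Y (Y w))) with hi
  have hMI : MI p X Y = ∑ w, p w * i w := by
    unfold MI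
    rw [entRV_eq, entRV_eq, entRV_eq, neg_add_eq_sub, sub_neg_eq_add, sub_eq_add_neg,
      ← sub_eq_add_neg, ← sub_eq_zero]
    rw [← Finset.sum_neg_distrib, ← Finset.sum_sub_distrib, ← Finset.sum_add_distrib,
      ← Finset.sum_sub_distrib]
    refine Finset.sum_eq_zero fun w _ => ?_
    rcases (hp.1 w).eq_or_lt with h | h
    · simp [← h]
    · have h1 := lt_of_lt_of_le h (le_distOf p hp.1 X w)
      have h2 := lt_of_lt_of_le h (le_distOf p hp.1 Y w)
      have h3 := lt_of_lt_of_le h (le_distOf p hp.1 (fun ω => (X ω, Y ω)) w)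
      simp only [hi]
      rw [Real.logb_div h3.ne' (by positivity), Real.logb_mul h1.ne' h2.ne']
      ring
  obtain ⟨w0, hw0⟩ := hpos
  have : ∑ w, p w * i w < ∑ w, p w * MI p X Y := by
    apply Finset.sum_lt_sum
    · intro w _
      rcases (hp.1 w).eq_or_lt with h | h
      · simp [← h]
      · exact mul_le_mul_of_nonneg_left (hc w h).le h.le
    · exact ⟨w0, Finset.mem_univ _, mul_lt_mul_of_pos_left (hc w0 hw0) hw0⟩
  rw [← Finset.sum_mul, hp.2, one_mul, ← hMI] at this
  exact lt_irrefl _ this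

theorem p1_isPMF {𝒮 : Type} [Fintype 𝒮] (𝒰 : Type) [Fintype 𝒰] [Nonempty 𝒰]
    (PS : 𝒮 → ℝ) (hPS : IsPMF PS) : IsPMF (p1 PS 𝒰) := by
  refine ⟨fun a => div_nonneg (hPS.1 _) (by positivity), ?_⟩
  unfold p1
  rw [Fintype.sum_prod_type]
  have : (Fintype.card 𝒰 : ℝ) ≠ 0 := by positivity
  simp only [Finset.sum_const, Finset.card_univ, nsmul_eq_mul]
  rw [← hPS.2]
  refine Finset.sum_congr rfl fun s _ => ?_
  field_simp

theorem pn_isPMF {𝒮 : Type} [Fintype 𝒮] (𝒰 : Type) [Fintype 𝒰] [Nonempty 𝒰]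
    (PS : 𝒮 → ℝ) (hPS : IsPMF PS) (n : ℕ) : IsPMF (pn PS 𝒰 n) := by
  classical
  have h := p1_isPMF 𝒰 PS hPS
  refine ⟨fun a => Finset.prod_nonneg fun i _ => h.1 _, ?_⟩
  have := Finset.prod_univ_sum (fun _ : Fin n => (Finset.univ : Finset (𝒮 × 𝒰)))
    (fun _ w => p1 PS 𝒰 w)
  simp only [h.2, Finset.prod_const_one, Fintype.piFinset_univ] at this
  exact this.symm

open scoped Classical in
theorem dirac_isPMF {α : Type*} [Fintype α] (a : α) :
    IsPMF (fun x => if x = a then (1 : ℝ) else 0) := by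
  refine ⟨fun x => ?_, by simp⟩
  dsimp only
  split_ifs <;> norm_num

/-- Common data: a joint weight dominating the acceptance region. -/
theorem acc_weight {𝒮 𝒳 𝒴 : Type} [Fintype 𝒮] [Fintype 𝒳] [Fintype 𝒴]
    (𝒰 : Type) [Fintype 𝒰] [Nonempty 𝒰] (PS : 𝒮 → ℝ) (hPS : IsPMF PS) (ℓ : ℝ)
    (f : 𝒮 × 𝒰 → 𝒳 × 𝒴) (γ : ℕ → ℝ) (n : ℕ) (hn : 1 ≤ n) :
    ∃ J : (Fin n → 𝒳) × (Fin n → 𝒴) → ℝ, (∀ xy, 0 ≤ J xy) ∧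
      (∀ x, ∑ y, J (x, y) ≤ distOf (pn PS 𝒰 n) (XnB f n) x) ∧
      (∀ y, ∑ x, J (x, y) ≤ distOf (pn PS 𝒰 n) (YnB f n) y) ∧
      ∀ xy ∈ AccB PS 𝒰 f ℓ γ n,
        0 < distOf (pn PS 𝒰 n) (XnB f n) xy.1 * distOf (pn PS 𝒰 n) (YnB f n) xy.2 ∧
        (2 : ℝ) ^ ((n : ℝ) * (ℓ - γ n)) *
          (distOf (pn PS 𝒰 n) (XnB f n) xy.1 * distOf (pn PS 𝒰 n) (YnB f n) xy.2) ≤ J xy := by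
  have hp := pn_isPMF 𝒰 PS hPS n
  have hn' : (0 : ℝ) < n := by exact_mod_cast hn
  have hX := distOf_nonneg (pn PS 𝒰 n) hp.1 (XnB f n)
  have hY := distOf_nonneg (pn PS 𝒰 n) hp.1 (YnB f n)
  by_cases hs : ℓ - γ n < 0
  · refine ⟨fun xy => distOf (pn PS 𝒰 n) (XnB f n) xy.1 * distOf (pn PS 𝒰 n) (YnB f n) xy.2,
      fun xy => mul_nonneg (hX _) (hY _), ?_, ?_, ?_⟩
    · intro x
      simp only
      rw [← Finset.mul_sum, distOf_sum, hp.2, mul_one]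
    · intro x
      simp only
      rw [← Finset.sum_mul, distOf_sum, hp.2, one_mul]
    · intro xy hxy
      simp only [AccB, Finset.mem_filter] at hxy
      refine ⟨hxy.2.1, mul_le_of_le_one_left hxy.2.1.le ?_⟩
      apply Real.rpow_le_one_of_one_le_of_nonpos (by norm_num)
      nlinarith
  · refine ⟨distOf (pn PS 𝒰 n) (fun ω => (XnB f n ω, YnB f n ω)),
      distOf_nonneg _ hp.1 _, fun x => (distOf_margX _ _ _ x).le,
      fun y => (distOf_margY _ _ _ y).le, ?_⟩
    intro xy hxy
    simp only [AccB, Finset.mem_filter] at hxy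
    obtain ⟨-, h1, h2⟩ := hxy
    refine ⟨h1, ?_⟩
    have hJ := distOf_nonneg _ hp.1 (fun ω => (XnB f n ω, YnB f n ω)) xy
    rcases hJ.eq_or_lt with h | h
    · rw [← h] at h2
      simp at h2
      exact absurd h2 (by linarith)
    · rw [lt_div_iff₀ hn', Real.lt_logb_iff_rpow_lt (by norm_num) (by positivity),
        lt_div_iff₀ h1, mul_comm (ℓ - γ n)] at h2
      exact h2.le

/-- under the symbolwise construction, the impersonation
success probabilities satisfy `Pₙˣ ≤ 2^{−n(ℓ−γₙ)}` and `Pₙʸ ≤ 2^{−n(ℓ−γₙ)}`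
for all `n ≥ 1`; consequently the liminf of the smaller of the two exponents
is at least `ℓ`. -/
theorem statement14 {𝒮 𝒳 𝒴 : Type} [Fintype 𝒮] [Fintype 𝒳] [Fintype 𝒴]
    (𝒰 : Type) [Fintype 𝒰] [Nonempty 𝒰]
    (PS : 𝒮 → ℝ) (hPS : IsPMF PS) (ℓ : ℝ) (hℓ : 0 ≤ ℓ)
    (f : 𝒮 × 𝒰 → 𝒳 × 𝒴) (g : 𝒳 × 𝒴 → Option 𝒮)
    (hHX : condEnt (p1 PS 𝒰) (fun su => su.1) (fun su => (f su).1)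
      = entRV (p1 PS 𝒰) (fun su => su.1))
    (hHY : condEnt (p1 PS 𝒰) (fun su => su.1) (fun su => (f su).2)
      = entRV (p1 PS 𝒰) (fun su => su.1))
    (hHXY : condEnt (p1 PS 𝒰) (fun su => su.1) f = 0)
    (hMI : MI (p1 PS 𝒰) (fun su => (f su).1) (fun su => (f su).2) = ℓ)
    (hg : ∀ s u, 0 < PS s → g (f (s, u)) = some s)
    (hg' : ∀ xy, (∀ su, f su ≠ xy) → g xy = none)
    (γ : ℕ → ℝ) (hγ : ∀ n, 0 < γ n) (hγ0 : Tendsto γ atTop (nhds 0))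
    (hγtop : Tendsto (fun n : ℕ => Real.sqrt (n : ℝ) * γ n) atTop atTop) :
    (∀ n, 1 ≤ n →
      PimpXB PS 𝒰 f ℓ γ n ≤ (2 : ℝ) ^ (-((n : ℝ) * (ℓ - γ n))) ∧
      PimpYB PS 𝒰 f ℓ γ n ≤ (2 : ℝ) ^ (-((n : ℝ) * (ℓ - γ n)))) ∧
    ℓ ≤ liminf (fun n => min (-Real.logb 2 (PimpXB PS 𝒰 f ℓ γ n) / (n : ℝ))
        (-Real.logb 2 (PimpYB PS 𝒰 f ℓ γ n) / (n : ℝ))) atTop := by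
  have hbX : ∀ n, 1 ≤ n → ∀ Q : {Q : (Fin n → 𝒳) → ℝ // IsPMF Q},
      ∑ xy ∈ AccB PS 𝒰 f ℓ γ n, Q.1 xy.1 * distOf (pn PS 𝒰 n) (YnB f n) xy.2
        ≤ (2 : ℝ) ^ (-((n : ℝ) * (ℓ - γ n))) := by
    intro n hn Q
    obtain ⟨J, h0, h1, h2, h3⟩ := acc_weight 𝒰 PS hPS ℓ f γ n hn
    rw [Real.rpow_neg (by norm_num)]
    exact aux_boundX _ J _ _ _ (by positivity) h0
      (distOf_nonneg _ (pn_isPMF 𝒰 PS hPS n).1 _) h1 h3 Q.1 Q.2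
  have hbY : ∀ n, 1 ≤ n → ∀ Q : {Q : (Fin n → 𝒴) → ℝ // IsPMF Q},
      ∑ xy ∈ AccB PS 𝒰 f ℓ γ n, distOf (pn PS 𝒰 n) (XnB f n) xy.1 * Q.1 xy.2
        ≤ (2 : ℝ) ^ (-((n : ℝ) * (ℓ - γ n))) := by
    intro n hn Q
    obtain ⟨J, h0, h1, h2, h3⟩ := acc_weight 𝒰 PS hPS ℓ f γ n hn
    rw [Real.rpow_neg (by norm_num)]
    exact aux_boundY _ J _ _ _ (by positivity) h0
      (distOf_nonneg _ (pn_isPMF 𝒰 PS hPS n).1 _) h2 h3 Q.1 Q.2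
  have hX : ∀ n, 1 ≤ n → PimpXB PS 𝒰 f ℓ γ n ≤ (2 : ℝ) ^ (-((n : ℝ) * (ℓ - γ n))) :=
    fun n hn => Real.iSup_le (hbX n hn) (by positivity)
  have hY : ∀ n, 1 ≤ n → PimpYB PS 𝒰 f ℓ γ n ≤ (2 : ℝ) ^ (-((n : ℝ) * (ℓ - γ n))) :=
    fun n hn => Real.iSup_le (hbY n hn) (by positivity)
  refine ⟨fun n hn => ⟨hX n hn, hY n hn⟩, ?_⟩
  have hp := p1_isPMF 𝒰 PS hPS
  obtain ⟨w, hw, hgood⟩ := exists_good (p1 PS 𝒰) hp (fun su => (f su).1) (fun su => (f su).2)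
  rw [hMI] at hgood
  set a := distOf (p1 PS 𝒰) (fun su => (f su).1) (f w).1 with ha
  set b := distOf (p1 PS 𝒰) (fun su => (f su).2) (f w).2 with hb
  set c := distOf (p1 PS 𝒰) (fun su => ((f su).1, (f su).2)) ((f w).1, (f w).2) with hc
  have ha0 : 0 < a := lt_of_lt_of_le hw (le_distOf _ hp.1 (fun su => (f su).1) w)
  have hb0 : 0 < b := lt_of_lt_of_le hw (le_distOf _ hp.1 (fun su => (f su).2) w)
  have hXn : ∀ n, distOf (pn PS 𝒰 n) (XnB f n) (fun _ => (f w).1) = a ^ n := fun n =>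
    distOf_pow (p1 PS 𝒰) (fun su => (f su).1) (f w).1 n _ _ (fun ω => by
      simp [XnB, funext_iff])
  have hYn : ∀ n, distOf (pn PS 𝒰 n) (YnB f n) (fun _ => (f w).2) = b ^ n := fun n =>
    distOf_pow (p1 PS 𝒰) (fun su => (f su).2) (f w).2 n _ _ (fun ω => by
      simp [YnB, funext_iff])
  have hXYn : ∀ n, distOf (pn PS 𝒰 n) (fun ω => (XnB f n ω, YnB f n ω))
      ((fun _ => (f w).1), (fun _ => (f w).2)) = c ^ n := fun n =>
    distOf_pow (p1 PS 𝒰) (fun su => ((f su).1, (f su).2)) ((f w).1, (f w).2) n _ _ (fun ω => by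
      simp only [XnB, YnB, funext_iff, Prod.mk.injEq, forall_and])
  have hmem : ∀ n, 1 ≤ n →
      ((fun _ => (f w).1), (fun _ => (f w).2)) ∈ AccB PS 𝒰 f ℓ γ n := by
    intro n hn
    have hn' : (n : ℝ) ≠ 0 := by positivity
    simp only [AccB, Finset.mem_filter, Finset.mem_univ, true_and]
    rw [hXn, hYn, hXYn]
    refine ⟨by positivity, ?_⟩
    rw [← mul_pow, ← div_pow, Real.logb_pow, mul_div_cancel_left₀ _ hn']
    linarith [hγ n]
  have hlX : ∀ n, 1 ≤ n → b ^ n ≤ PimpXB PS 𝒰 f ℓ γ n := by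
    intro n hn
    refine le_trans ?_ (le_ciSup ⟨_, Set.forall_mem_range.2 (hbX n hn)⟩
      ⟨_, dirac_isPMF (fun _ => (f w).1)⟩)
    refine le_trans ?_ (Finset.single_le_sum (fun xy _ => ?_) (hmem n hn))
    · simp [hYn]
    · exact mul_nonneg ((dirac_isPMF _).1 _) (distOf_nonneg _ (pn_isPMF 𝒰 PS hPS n).1 _ _)
  have hlY : ∀ n, 1 ≤ n → a ^ n ≤ PimpYB PS 𝒰 f ℓ γ n := by
    intro n hn
    refine le_trans ?_ (le_ciSup ⟨_, Set.forall_mem_range.2 (hbY n hn)⟩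
      ⟨_, dirac_isPMF (fun _ => (f w).2)⟩)
    refine le_trans ?_ (Finset.single_le_sum (fun xy _ => ?_) (hmem n hn))
    · simp [hXn]
    · exact mul_nonneg (distOf_nonneg _ (pn_isPMF 𝒰 PS hPS n).1 _ _) ((dirac_isPMF _).1 _)
  have hlow : ∀ n : ℕ, 1 ≤ n → ∀ P d : ℝ, 0 < d → d ^ n ≤ P →
      P ≤ (2 : ℝ) ^ (-((n : ℝ) * (ℓ - γ n))) →
      ℓ - γ n ≤ -Real.logb 2 P / (n : ℝ) ∧ -Real.logb 2 P / (n : ℝ) ≤ -Real.logb 2 d := by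
    intro n hn P d hd h1 h2
    have hn' : (0 : ℝ) < n := by exact_mod_cast hn
    have hP : 0 < P := lt_of_lt_of_le (by positivity) h1
    constructor
    · rw [le_div_iff₀ hn']
      have := (Real.logb_le_iff_le_rpow (by norm_num : (1 : ℝ) < 2) hP).2 h2
      linarith
    · rw [div_le_iff₀ hn']
      have := Real.logb_le_logb_of_le (by norm_num : (1 : ℝ) < 2) (by positivity) h1
      rw [Real.logb_pow] at this
      linarith
  have hcob : IsCoboundedUnder (· ≥ ·) atTop
      (fun n => min (-Real.logb 2 (PimpXB PS 𝒰 f ℓ γ n) / (n : ℝ))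
        (-Real.logb 2 (PimpYB PS 𝒰 f ℓ γ n) / (n : ℝ))) := by
    apply IsBoundedUnder.isCoboundedUnder_ge
    refine ⟨-Real.logb 2 b, ?_⟩
    rw [eventually_map]
    filter_upwards [eventually_ge_atTop 1] with n hn
    exact (min_le_left _ _).trans (hlow n hn _ b hb0 (hlX n hn) (hX n hn)).2
  apply le_of_forall_lt
  intro r hr
  obtain ⟨r', h1, h2⟩ := exists_between hr
  refine lt_of_lt_of_le h1 (le_liminf_of_le hcob ?_)
  filter_upwards [eventually_ge_atTop 1, hγ0.eventually (gt_mem_nhds (sub_pos.2 h2))] with n hn hg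
  refine le_min ?_ ?_
  · linarith [(hlow n hn _ b hb0 (hlX n hn) (hX n hn)).1]
  · linarith [(hlow n hn _ a ha0 (hlY n hn) (hY n hn)).1]
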